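/- There is a constant d > 1 such that for every real r ≥ 2 with f(r) > d² and every x ∈ c₀₀ with |||x|||_r ≠ ‖x‖_{ℓ∞}, one has |||x|||_r ≤ (1/(1 − d/√f(r))) · sup{ (1/f(ℓ)) Σ_{i=1}^ℓ |||E_i(x)|||_{r^{f(r)}} : ℓ ∈ ℕ, ℓ ≥ r, E₁ < E₂ < ⋯ < E_ℓ finite subsets of ℕ }. -/

import Mathlib

abbrev c00 : Type := ℕ →₀ ℝ

noncomputable def flog (x : ℝ) : ℝ := Real.logb 2 (x + 1)

noncomputable def supNorm (x : c00) : ℝ := ⨆ i, |x i|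

def proj (E : Finset ℕ) (x : c00) : c00 := x.filter (· ∈ E)

def FLt (A B : Finset ℕ) : Prop := ∀ a ∈ A, ∀ b ∈ B, a < b

def IsNormC00 (N : c00 → ℝ) : Prop :=
  (∀ x, N x = 0 ↔ x = 0) ∧ (∀ x y, N (x + y) ≤ N x + N y) ∧
    ∀ (a : ℝ) (x : c00), N (a • x) = |a| * N x

def schSet (N : c00 → ℝ) (x : c00) : Set ℝ :=
  {s | ∃ n : ℕ, 2 ≤ n ∧ ∃ E : Fin n → Finset ℕ,
    (∀ i j : Fin n, i < j → FLt (E i) (E j)) ∧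
    s = (flog n)⁻¹ * ∑ i, N (proj (E i) x)}

def IsSchlumprechtNorm (N : c00 → ℝ) : Prop :=
  IsNormC00 N ∧ ∀ x : c00, IsLUB (insert (supNorm x) (schSet N x)) (N x)

def IsBlockSeq (x : ℕ → c00) : Prop :=
  (∀ n, x n ≠ 0) ∧ ∀ n, ∀ i ∈ (x n).support, ∀ j ∈ (x (n+1)).support, i < j

def SeqEquiv (N : c00 → ℝ) (u v : ℕ → c00) : Prop :=
  ∃ c : ℝ, 1 ≤ c ∧ ∀ a : ℕ →₀ ℝ,
    (1 / c) * N (a.sum fun i t => t • u i) ≤ N (a.sum fun i t => t • v i) ∧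
    N (a.sum fun i t => t • v i) ≤ c * N (a.sum fun i t => t • u i)

/-- `‖x‖_ℓ` : the supremum of `(1/f(ℓ)) ∑ᵢ N(Eᵢ x)` over `E₁ < ⋯ < E_ℓ`. -/
noncomputable def normL (N : c00 → ℝ) (l : ℕ) (x : c00) : ℝ :=
  sSup {s | ∃ E : Fin l → Finset ℕ, (∀ i j : Fin l, i < j → FLt (E i) (E j)) ∧
    s = (flog l)⁻¹ * ∑ i, N (proj (E i) x)}

/-- `|||x|||_r = max(‖x‖_{ℓ∞}, sup {‖x‖_ℓ : ℓ ∈ ℕ, ℓ ≥ r})`. -/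
noncomputable def normR (N : c00 → ℝ) (r : ℝ) (x : c00) : ℝ :=
  max (supNorm x) (sSup {s | ∃ l : ℕ, r ≤ (l : ℝ) ∧ s = normL N l x})

/-!
Vectors of `c₀₀` have finite support and `f(l) → ∞`, so all suprema in sight are attained. Let
`A = |||x|||_r` be attained at `l ≥ r` and `E₁ < ⋯ < E_l`, that is, `f(l) A = ∑ ‖Eᵢx‖`, and let
`s = √f(r)`. If the norm of a piece `Eᵢx` exceeds `|||Eᵢx|||_R`, `R = r ^ f(r)`, then it is attained
at some `n` with `2 ≤ n < R`, and `f(n) < f(r)² = s⁴` lies in one of the four bands `[sᵏ, sᵏ⁺¹]`,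
`k < 4`.

Cut every piece belonging to one fixed band into the `n` sets attaining its norm. This multiplies
its contribution by `f(n)`, where `f(n) - 1 ≥ f(n) / 3 ≥ sᵏ / 3` since `f(2) ≥ 3 / 2`, while the
number of sets grows from `l` to some `m` with `f(m) ≤ f(l) + sᵏ⁺¹`. As the sum over the new family
is at most `f(m) A` and the old one was `f(l) A`, the pieces of the band contribute at most `3 s A`
to `f(l) A`. Together the bands contribute at most `12 s A ≤ (12 / s) f(l) A`, and the remaining
pieces give the claim.
-/

open Filter Topology Function

theorem flog_zero : flog 0 = 0 := by simp [flog]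

theorem flog_one : flog 1 = 1 := by norm_num [flog]

theorem flog_lt_flog {x y : ℝ} (hx : -1 < x) (hxy : x < y) : flog x < flog y :=
  Real.logb_lt_logb one_lt_two (by linarith) (by linarith)

theorem flog_le_flog {x y : ℝ} (hx : -1 < x) (hxy : x ≤ y) : flog x ≤ flog y :=
  Real.logb_le_logb_of_le one_lt_two (by linarith) (by linarith)

theorem flog_nonneg {x : ℝ} (hx : 0 ≤ x) : 0 ≤ flog x :=
  flog_zero.symm.trans_le (flog_le_flog (by norm_num) hx)

theorem flog_pos {x : ℝ} (hx : 0 < x) : 0 < flog x :=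
  flog_zero.symm.trans_lt (flog_lt_flog (by norm_num) hx)

theorem flog_le_iff {x y : ℝ} (hx : -1 < x) : flog x ≤ y ↔ x + 1 ≤ 2 ^ y :=
  Real.logb_le_iff_le_rpow one_lt_two (by linarith)

theorem two_rpow_flog {x : ℝ} (hx : -1 < x) : (2 : ℝ) ^ flog x = x + 1 :=
  Real.rpow_logb two_pos (by norm_num) (by linarith)

theorem three_halves_le_flog {x : ℝ} (hx : 2 ≤ x) : 3 / 2 ≤ flog x := by
  refine le_trans ?_ (flog_le_flog (by norm_num) hx)
  have h : flog 8 ≤ 2 * flog 2 := by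
    rw [two_mul, flog, flog, ← Real.logb_mul (by norm_num) (by norm_num)]
    norm_num
  have h8 : 3 ≤ flog 8 := by
    rw [flog, Real.le_logb_iff_rpow_le one_lt_two (by norm_num)]
    norm_num
  linarith

theorem flog_rpow_le {x p : ℝ} (hx : 0 ≤ x) (hp : 1 ≤ p) : flog (x ^ p) ≤ flog x * p := by
  have hxp : 0 ≤ x ^ p := Real.rpow_nonneg hx p
  rw [flog_le_iff (by linarith), Real.rpow_mul two_pos.le, two_rpow_flog (by linarith)]
  simpa using Real.add_rpow_le_rpow_add hx zero_le_one hp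

theorem flog_sum_le {ι : Type*} {s : Finset ι} {m : ι → ℕ} {β : ℝ} (hβ : 0 ≤ β)
    (hm : ∀ i ∈ s, flog (m i) ≤ β) : flog ↑(∑ i ∈ s, m i) ≤ flog s.card + β := by
  have hpow : (1 : ℝ) ≤ 2 ^ β := Real.one_le_rpow one_le_two hβ
  have hsum : ((∑ i ∈ s, m i : ℕ) : ℝ) ≤ s.card * (2 ^ β - 1) := by
    rw [Nat.cast_sum, ← nsmul_eq_mul]
    refine Finset.sum_le_card_nsmul s _ _ fun i hi => ?_
    linarith [(flog_le_iff (neg_one_lt_zero.trans_le (m i).cast_nonneg)).1 (hm i hi)]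
  rw [flog_le_iff (neg_one_lt_zero.trans_le (Nat.cast_nonneg _)), Real.rpow_add two_pos,
    two_rpow_flog (neg_one_lt_zero.trans_le (Nat.cast_nonneg _))]
  linarith

theorem tendsto_flog_atTop : Tendsto flog atTop atTop :=
  (Real.tendsto_logb_atTop one_lt_two).comp (tendsto_atTop_add_const_right _ 1 tendsto_id)

theorem exists_isMaxOn_of_tendsto_cocompact_zero {X : Type*} [TopologicalSpace X] {f : X → ℝ}
    {s : Set X} (hf : ContinuousOn f s) (hs : IsClosed s) (hne : s.Nonempty)
    (hf0 : ∀ a ∈ s, 0 ≤ f a) (hlim : Tendsto f (cocompact X) (𝓝 0)) :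
    ∃ a ∈ s, IsMaxOn f s a := by
  by_cases hpos : ∃ a ∈ s, 0 < f a
  · obtain ⟨a, ha, hfa⟩ := hpos
    exact hf.exists_isMaxOn' hs ha ((hlim.eventually_le_const hfa).filter_mono inf_le_left)
  · push Not at hpos
    obtain ⟨a, ha⟩ := hne
    exact ⟨a, ha, fun b hb => (hpos b hb).trans (hf0 a ha)⟩

theorem proj_proj (A B : Finset ℕ) (x : c00) : proj A (proj B x) = proj (A ∩ B) x := by
  ext i
  by_cases hA : i ∈ A <;> by_cases hB : i ∈ B <;> simp [proj, hA, hB]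

theorem proj_support_inter (A : Finset ℕ) (x : c00) : proj (x.support ∩ A) x = proj A x := by
  ext i
  by_cases hi : x i = 0 <;> simp [proj, Finsupp.filter_apply, hi]

theorem proj_support (x : c00) : proj x.support x = x := by
  ext i
  by_cases hi : x i = 0 <;> simp [proj, hi]

/-- Successive families of finite sets, `E₁ < E₂ < ⋯`, over an arbitrary ordered index type;
members may be empty. -/
def IsSuccessive {ι : Type*} [LT ι] (E : ι → Finset ℕ) : Prop :=
  ∀ i j, i < j → FLt (E i) (E j)

theorem IsSuccessive.pairwise_disjoint {ι : Type*} [LinearOrder ι] {E : ι → Finset ℕ}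
    (hE : IsSuccessive E) : Pairwise (Disjoint on E) :=
  (pairwise_disjoint_on E).2 fun i j hij =>
    Finset.disjoint_left.2 fun a hi hj => (hE i j hij a hi a hj).false

theorem IsSuccessive.sigmaLex {ι : Type*} [LinearOrder ι] {κ : ι → Type*} [∀ i, LT (κ i)]
    {E : ι → Finset ℕ} (hE : IsSuccessive E) {G : ∀ i, κ i → Finset ℕ}
    (hG : ∀ i, IsSuccessive (G i)) :
    IsSuccessive fun p : Σₗ i, κ i => G (ofLex p).1 (ofLex p).2 ∩ E (ofLex p).1 := by
  rintro ⟨i, j⟩ ⟨i', j'⟩ hlt a ha b hb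
  rw [Finset.mem_inter] at ha hb
  rcases Sigma.Lex.lt_def.1 hlt with h | ⟨h, h'⟩
  · exact hE _ _ h a ha.2 b hb.2
  · obtain rfl : i = i' := h
    exact hG i j j' h' a ha.1 b hb.1

section NormL

/-- The set of averages `(1 / f(l)) ∑ᵢ N(Eᵢx)` over successive `E₁ < ⋯ < E_l`, whose supremum
is `‖x‖_l`. -/
def successiveAverages (N : c00 → ℝ) (l : ℕ) (x : c00) : Set ℝ :=
  {t | ∃ E : Fin l → Finset ℕ, IsSuccessive E ∧ t = (flog l)⁻¹ * ∑ i, N (proj (E i) x)}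

variable (N : c00 → ℝ) (l : ℕ) (x : c00)

theorem normL_eq_sSup : normL N l x = sSup (successiveAverages N l x) := rfl

theorem successiveAverages_nonempty : (successiveAverages N l x).Nonempty :=
  ⟨_, fun _ => ∅, fun _ _ _ _ h => absurd h (Finset.notMem_empty _), rfl⟩

theorem successiveAverages_finite : (successiveAverages N l x).Finite := by
  refine (Set.finite_range fun E : Fin l → x.support.powerset =>
    (flog l)⁻¹ * ∑ i, N (proj (E i) x)).subset ?_
  rintro _ ⟨E, -, rfl⟩
  exact ⟨fun i => ⟨x.support ∩ E i, Finset.mem_powerset.2 Finset.inter_subset_left⟩,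
    by simp only [proj_support_inter]⟩

variable {N l x} in
theorem IsSuccessive.inv_flog_mul_sum_le {E : Fin l → Finset ℕ} (hE : IsSuccessive E) :
    (flog l)⁻¹ * ∑ i, N (proj (E i) x) ≤ normL N l x :=
  le_csSup (successiveAverages_finite N l x).bddAbove ⟨E, hE, rfl⟩

theorem exists_flog_mul_normL_eq :
    ∃ E : Fin l → Finset ℕ, IsSuccessive E ∧ flog l * normL N l x = ∑ i, N (proj (E i) x) := by
  obtain ⟨E, hE, h⟩ :=
    (successiveAverages_nonempty N l x).csSup_mem (successiveAverages_finite N l x)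
  refine ⟨E, hE, ?_⟩
  rw [normL_eq_sSup, h]
  rcases Nat.eq_zero_or_pos l with rfl | hl
  · simp [flog_zero]
  · exact mul_inv_cancel_left₀ (flog_pos (Nat.cast_pos.2 hl)).ne' _

variable {N x} in
theorem IsSuccessive.sum_le_flog_mul_normL {ι : Type*} [Fintype ι] [LinearOrder ι]
    {E : ι → Finset ℕ} (hE : IsSuccessive E) :
    ∑ i, N (proj (E i) x) ≤ flog (Fintype.card ι) * normL N (Fintype.card ι) x := by
  let e := Fintype.orderIsoFinOfCardEq ι rfl
  rcases isEmpty_or_nonempty ι with _ | _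
  · simp [flog_zero]
  · rw [← e.toEquiv.sum_comp, ← inv_mul_le_iff₀ (flog_pos (Nat.cast_pos.2 Fintype.card_pos))]
    exact IsSuccessive.inv_flog_mul_sum_le fun i j hij => hE _ _ (e.lt_iff_lt.2 hij)

theorem le_normL_one : N x ≤ normL N 1 x := by
  have hE : IsSuccessive fun _ : Fin 1 => x.support := fun i j hij =>
    absurd hij (Subsingleton.elim i j).not_lt
  simpa [proj_support, flog_one] using hE.inv_flog_mul_sum_le (N := N) (x := x)

variable {N l x} in
theorem IsSuccessive.sum_flog_mul_normL_le {E : Fin l → Finset ℕ} (hE : IsSuccessive E)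
    (m : Fin l → ℕ) :
    ∑ i, flog (m i) * normL N (m i) (proj (E i) x) ≤
      flog ↑(∑ i, m i) * normL N (∑ i, m i) x := by
  choose G hG hG_eq using fun i => exists_flog_mul_normL_eq N (m i) (proj (E i) x)
  have hcard : Fintype.card (Σₗ i, Fin (m i)) = ∑ i, m i := by
    simp [← Fintype.card_congr (toLex (α := Σ i, Fin (m i)))]
  calc ∑ i, flog (m i) * normL N (m i) (proj (E i) x)
      = ∑ i, ∑ j, N (proj (G i j ∩ E i) x) := by simp only [hG_eq, proj_proj]
    _ = ∑ p : Σₗ i, Fin (m i), N (proj (G (ofLex p).1 (ofLex p).2 ∩ E (ofLex p).1) x) := by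
        rw [← (toLex (α := Σ i, Fin (m i))).sum_comp, Fintype.sum_sigma]
        rfl
    _ ≤ flog ↑(∑ i, m i) * normL N (∑ i, m i) x :=
        hcard ▸ (hE.sigmaLex hG).sum_le_flog_mul_normL

end NormL

theorem supNorm_nonneg (x : c00) : 0 ≤ supNorm x :=
  Real.iSup_nonneg fun _ => abs_nonneg _

theorem supNorm_le_normR (N : c00 → ℝ) (r : ℝ) (x : c00) : supNorm x ≤ normR N r x :=
  le_max_left _ _

theorem normR_nonneg (N : c00 → ℝ) (r : ℝ) (x : c00) : 0 ≤ normR N r x :=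
  (supNorm_nonneg x).trans (supNorm_le_normR N r x)

namespace IsNormC00

variable {N : c00 → ℝ}

theorem map_zero (hN : IsNormC00 N) : N 0 = 0 := (hN.1 0).2 rfl

theorem nonneg (hN : IsNormC00 N) (x : c00) : 0 ≤ N x := by
  have hneg : N (-x) = N x := by simpa using hN.2.2 (-1) x
  have hadd := hN.2.1 x (-x)
  rw [add_neg_cancel, hN.map_zero] at hadd
  linarith

theorem le_sum_single (hN : IsNormC00 N) (x : c00) :
    N x ≤ ∑ k ∈ x.support, N (Finsupp.single k (x k)) := by
  conv_lhs => rw [← Finsupp.sum_single x]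
  exact Finset.le_sum_of_subadditive N hN.map_zero.le hN.2.1 _ _

theorem sum_proj_le_sum_single (hN : IsNormC00 N) {l : ℕ} {E : Fin l → Finset ℕ}
    (hE : IsSuccessive E) (x : c00) :
    ∑ i, N (proj (E i) x) ≤ ∑ k ∈ x.support, N (Finsupp.single k (x k)) := by
  calc ∑ i, N (proj (E i) x)
      ≤ ∑ i, ∑ k ∈ x.support ∩ E i, N (Finsupp.single k (x k)) := by
        refine Finset.sum_le_sum fun i _ => (hN.le_sum_single _).trans_eq ?_
        rw [proj, Finsupp.support_filter, Finset.filter_mem_eq_inter]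
        refine Finset.sum_congr rfl fun k hk => ?_
        rw [Finsupp.filter_apply_pos _ _ (Finset.mem_of_mem_inter_right hk)]
    _ = ∑ k ∈ Finset.univ.biUnion fun i => x.support ∩ E i, N (Finsupp.single k (x k)) :=
        (Finset.sum_biUnion fun i _ j _ hij => (hE.pairwise_disjoint hij).mono
          Finset.inter_subset_right Finset.inter_subset_right).symm
    _ ≤ ∑ k ∈ x.support, N (Finsupp.single k (x k)) :=
        Finset.sum_le_sum_of_subset_of_nonneg
          (Finset.biUnion_subset.2 fun _ _ => Finset.inter_subset_left)
          fun _ _ _ => hN.nonneg _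

theorem normL_nonneg (hN : IsNormC00 N) (l : ℕ) (x : c00) : 0 ≤ normL N l x := by
  refine Real.sSup_nonneg ?_
  rintro _ ⟨E, -, rfl⟩
  exact mul_nonneg (inv_nonneg.2 (flog_nonneg l.cast_nonneg))
    (Finset.sum_nonneg fun i _ => hN.nonneg _)

theorem tendsto_normL (hN : IsNormC00 N) (x : c00) :
    Tendsto (fun l => normL N l x) atTop (𝓝 0) := by
  have hlim : Tendsto (fun l : ℕ => (∑ k ∈ x.support, N (Finsupp.single k (x k))) / flog l)
      atTop (𝓝 0) := (tendsto_flog_atTop.comp tendsto_natCast_atTop_atTop).const_div_atTop _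
  refine squeeze_zero' (.of_forall fun l => hN.normL_nonneg l x) ?_ hlim
  filter_upwards [eventually_gt_atTop 0] with l hl
  obtain ⟨E, hE, hE_eq⟩ := exists_flog_mul_normL_eq N l x
  rw [le_div_iff₀' (flog_pos (Nat.cast_pos.2 hl)), hE_eq]
  exact hN.sum_proj_le_sum_single hE x

theorem bddAbove_normL (hN : IsNormC00 N) (r : ℝ) (x : c00) :
    BddAbove {t | ∃ l : ℕ, r ≤ l ∧ t = normL N l x} := by
  refine (hN.tendsto_normL x).bddAbove_range.mono ?_
  rintro _ ⟨l, -, rfl⟩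
  exact ⟨l, rfl⟩

theorem normL_le_normR (hN : IsNormC00 N) {r : ℝ} {l : ℕ} (hl : r ≤ l) (x : c00) :
    normL N l x ≤ normR N r x :=
  (le_csSup (hN.bddAbove_normL r x) ⟨l, hl, rfl⟩).trans (le_max_right _ _)

theorem normR_eq_supNorm_or_exists_eq_normL (hN : IsNormC00 N) (r : ℝ) (x : c00) :
    normR N r x = supNorm x ∨ ∃ l : ℕ, r ≤ l ∧ normR N r x = normL N l x := by
  obtain ⟨l, hl, hmax⟩ := exists_isMaxOn_of_tendsto_cocompact_zero (X := ℕ)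
    (s := {l | r ≤ (l : ℝ)}) (f := fun l => normL N l x) continuous_of_discreteTopology.continuousOn
    (isClosed_discrete _) ⟨_, Nat.le_ceil r⟩ (fun l _ => hN.normL_nonneg l x)
    (by simpa only [cocompact_eq_cofinite, Nat.cofinite_eq_atTop] using hN.tendsto_normL x)
  have hsSup : sSup {t | ∃ l : ℕ, r ≤ (l : ℝ) ∧ t = normL N l x} = normL N l x :=
    IsGreatest.csSup_eq ⟨⟨l, hl, rfl⟩, by rintro _ ⟨k, hk, rfl⟩; exact hmax hk⟩
  rw [normR, hsSup]
  exact (max_choice _ _).imp_right fun h => ⟨l, hl, h⟩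

theorem normR_anti (hN : IsNormC00 N) {r R : ℝ} (h : r ≤ R) (x : c00) :
    normR N R x ≤ normR N r x := by
  rcases hN.normR_eq_supNorm_or_exists_eq_normL R x with hR | ⟨l, hl, hR⟩
  · exact hR.trans_le (supNorm_le_normR N r x)
  · exact hR.trans_le (hN.normL_le_normR (h.trans hl) x)

theorem sum_flog_mul_normL_proj_le (hN : IsNormC00 N) {r β : ℝ} {l : ℕ} (hl : r ≤ l)
    {E : Fin l → Finset ℕ} (hE : IsSuccessive E) {m : Fin l → ℕ} (hβ : 0 ≤ β)
    (hm : ∀ i, 1 ≤ m i) (hmβ : ∀ i, flog (m i) ≤ β) (x : c00) :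
    ∑ i, flog (m i) * normL N (m i) (proj (E i) x) ≤ (flog l + β) * normR N r x := by
  have hlm : l ≤ ∑ i, m i := by
    simpa using Finset.card_nsmul_le_sum Finset.univ m 1 fun i _ => hm i
  have hflog : flog ↑(∑ i, m i) ≤ flog l + β := by
    simpa using flog_sum_le (s := Finset.univ) hβ fun i _ => hmβ i
  calc ∑ i, flog (m i) * normL N (m i) (proj (E i) x)
      ≤ flog ↑(∑ i, m i) * normL N (∑ i, m i) x := hE.sum_flog_mul_normL_le m
    _ ≤ flog ↑(∑ i, m i) * normR N r x := by
        gcongr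
        · exact flog_nonneg (Nat.cast_nonneg _)
        · exact hN.normL_le_normR (hl.trans (Nat.cast_le.2 hlm)) x
    _ ≤ (flog l + β) * normR N r x := by
        gcongr
        exact normR_nonneg N r x

end IsNormC00

theorem IsSchlumprechtNorm.eq_normR_two {N : c00 → ℝ} (hN : IsSchlumprechtNorm N) (x : c00) :
    N x = normR N 2 x := by
  apply le_antisymm
  · refine (hN.2 x).2 ?_
    rintro _ (rfl | ⟨n, hn, E, hE, rfl⟩)
    · exact supNorm_le_normR N 2 x
    · exact (IsSuccessive.inv_flog_mul_sum_le hE).trans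
        (hN.1.normL_le_normR (Nat.ofNat_le_cast.2 hn) x)
  · rcases hN.1.normR_eq_supNorm_or_exists_eq_normL 2 x with h | ⟨l, hl, h⟩
    · exact h.trans_le ((hN.2 x).1 (Set.mem_insert _ _))
    · refine h.trans_le (csSup_le (successiveAverages_nonempty N l x) ?_)
      rintro _ ⟨E, hE, rfl⟩
      exact (hN.2 x).1 (Set.mem_insert_of_mem _ ⟨l, Nat.ofNat_le_cast.1 hl, E, hE, rfl⟩)

/-- `y` has a scale in `[α, β]` if its norm is attained as `‖y‖_n` for some `n ≥ 2` with
`α ≤ f(n) ≤ β`. Only `N y ≤ ‖y‖_n` is required; the other inequality is automatic for the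
Schlumprecht norm. -/
def HasScale (N : c00 → ℝ) (α β : ℝ) (y : c00) : Prop :=
  ∃ n : ℕ, 2 ≤ n ∧ α ≤ flog n ∧ flog n ≤ β ∧ N y ≤ normL N n y

open Classical in
theorem IsNormC00.exists_add_ite_le_flog_mul_normL {N : c00 → ℝ} (hN : IsNormC00 N)
    {α β : ℝ} (hβ : 1 ≤ β) (y : c00) :
    ∃ m : ℕ, 1 ≤ m ∧ flog m ≤ β ∧
      N y + α / 3 * (if HasScale N α β y then N y else 0) ≤ flog m * normL N m y := by
  split_ifs with hy
  · obtain ⟨n, hn, hα, hnβ, hle⟩ := hy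
    refine ⟨n, one_le_two.trans hn, hnβ, ?_⟩
    have hflog : 1 + α / 3 ≤ flog n := by
      linarith [three_halves_le_flog (Nat.ofNat_le_cast.2 hn)]
    calc N y + α / 3 * N y = (1 + α / 3) * N y := by ring
      _ ≤ flog n * normL N n y := by
          gcongr
          exacts [hN.nonneg y, flog_nonneg n.cast_nonneg]
  · refine ⟨1, le_rfl, ?_, ?_⟩
    · rwa [Nat.cast_one, flog_one]
    · simpa [flog_one] using le_normL_one N y

open Classical in
theorem IsNormC00.mul_sum_hasScale_le {N : c00 → ℝ} (hN : IsNormC00 N) {r α β : ℝ} {l : ℕ}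
    (hl : r ≤ l) {E : Fin l → Finset ℕ} (hE : IsSuccessive E) {x : c00}
    (hopt : flog l * normR N r x ≤ ∑ i, N (proj (E i) x)) (hβ : 1 ≤ β) :
    α * ∑ i, (if HasScale N α β (proj (E i) x) then N (proj (E i) x) else 0) ≤
      3 * β * normR N r x := by
  choose m hm hmβ hle using fun i =>
    hN.exists_add_ite_le_flog_mul_normL (α := α) hβ (proj (E i) x)
  have hsum := (Finset.sum_le_sum fun i (_ : i ∈ Finset.univ) => hle i).trans
    (hN.sum_flog_mul_normL_proj_le hl hE (zero_le_one.trans hβ) hm hmβ x)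
  rw [Finset.sum_add_distrib, ← Finset.mul_sum] at hsum
  linarith

namespace IsSchlumprechtNorm

variable {N : c00 → ℝ}

theorem le_normR_or_exists_hasScale (hN : IsSchlumprechtNorm N) {R s : ℝ} {K : ℕ} (hs : 1 < s)
    (hR : ∀ n : ℕ, (n : ℝ) < R → flog n < s ^ K) (y : c00) :
    N y ≤ normR N R y ∨ ∃ k < K, HasScale N (s ^ k) (s ^ (k + 1)) y := by
  rw [or_iff_not_imp_left, not_le]
  intro hlt
  rcases hN.1.normR_eq_supNorm_or_exists_eq_normL 2 y with h | ⟨n, hn, h⟩ <;>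
    rw [← hN.eq_normR_two] at h
  · exact absurd (h.trans_le (supNorm_le_normR N R y)) hlt.not_ge
  · have hnR : (n : ℝ) < R := by
      by_contra! hRn
      exact absurd (h.trans_le (hN.1.normL_le_normR hRn y)) hlt.not_ge
    obtain ⟨k, hk, hk'⟩ := exists_nat_pow_near
      (show 1 ≤ flog n by linarith [three_halves_le_flog hn]) hs
    exact ⟨k, (pow_lt_pow_iff_right₀ hs).1 (hk.trans_lt (hR n hnR)),
      n, Nat.ofNat_le_cast.1 hn, hk, hk'.le, h.le⟩

open Classical in
theorem le_normR_add_sum_hasScale (hN : IsSchlumprechtNorm N) {R s : ℝ} {K : ℕ} (hs : 1 < s)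
    (hR : ∀ n : ℕ, (n : ℝ) < R → flog n < s ^ K) (y : c00) :
    N y ≤ normR N R y +
      ∑ k ∈ Finset.range K, if HasScale N (s ^ k) (s ^ (k + 1)) y then N y else 0 := by
  have hnonneg : ∀ k ∈ Finset.range K,
      0 ≤ if HasScale N (s ^ k) (s ^ (k + 1)) y then N y else 0 := fun k _ => by
    split_ifs
    exacts [hN.1.nonneg y, le_rfl]
  rcases hN.le_normR_or_exists_hasScale hs hR y with h | ⟨k, hk, h⟩
  · exact h.trans (le_add_of_nonneg_right (Finset.sum_nonneg hnonneg))
  · have hterm := Finset.single_le_sum hnonneg (Finset.mem_range.2 hk)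
    rw [if_pos h] at hterm
    exact hterm.trans (le_add_of_nonneg_left (normR_nonneg N R y))

open Classical in
theorem flog_mul_normR_le_sum_add (hN : IsSchlumprechtNorm N) {r R s : ℝ} {K l : ℕ} (hs : 1 < s)
    (hR : ∀ n : ℕ, (n : ℝ) < R → flog n < s ^ K) (hl : r ≤ l) {E : Fin l → Finset ℕ}
    (hE : IsSuccessive E) {x : c00} (hopt : flog l * normR N r x ≤ ∑ i, N (proj (E i) x)) :
    flog l * normR N r x ≤ ∑ i, normR N R (proj (E i) x) + K * (3 * s * normR N r x) := by
  have hband : ∀ k ∈ Finset.range K,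
      ∑ i, (if HasScale N (s ^ k) (s ^ (k + 1)) (proj (E i) x) then N (proj (E i) x) else 0) ≤
        3 * s * normR N r x := fun k _ => by
    refine le_of_mul_le_mul_left ?_ (pow_pos (zero_lt_one.trans hs) k)
    calc _ ≤ 3 * s ^ (k + 1) * normR N r x :=
          hN.1.mul_sum_hasScale_le hl hE hopt (one_le_pow₀ hs.le)
      _ = s ^ k * (3 * s * normR N r x) := by ring
  calc flog l * normR N r x ≤ ∑ i, N (proj (E i) x) := hopt
    _ ≤ ∑ i, (normR N R (proj (E i) x) + ∑ k ∈ Finset.range K,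
          if HasScale N (s ^ k) (s ^ (k + 1)) (proj (E i) x) then N (proj (E i) x) else 0) :=
        Finset.sum_le_sum fun i _ => hN.le_normR_add_sum_hasScale hs hR _
    _ ≤ ∑ i, normR N R (proj (E i) x) + K * (3 * s * normR N r x) := by
        rw [Finset.sum_add_distrib, Finset.sum_comm]
        gcongr
        simpa using Finset.sum_le_card_nsmul _ _ _ hband

theorem exists_mul_normR_le_sum_normR (hN : IsSchlumprechtNorm N) {r : ℝ} (hr : 0 ≤ r)
    (hfr : 1 < flog r) {x : c00} (hx : normR N r x ≠ supNorm x) :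
    ∃ l : ℕ, r ≤ l ∧ ∃ E : Fin l → Finset ℕ, IsSuccessive E ∧
      (1 - 12 / √(flog r)) * normR N r x ≤
        (flog l)⁻¹ * ∑ i, normR N (r ^ flog r) (proj (E i) x) := by
  obtain ⟨l, hl, hA⟩ := (hN.1.normR_eq_supNorm_or_exists_eq_normL r x).resolve_left hx
  obtain ⟨E, hE, hopt⟩ := exists_flog_mul_normL_eq N l x
  refine ⟨l, hl, E, hE, ?_⟩
  set s := √(flog r)
  have hs : 1 < s := Real.lt_sqrt_of_sq_lt (by simpa using hfr)
  have hs2 : s ^ 2 = flog r := Real.sq_sqrt (by linarith)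
  have hR : ∀ n : ℕ, (n : ℝ) < r ^ flog r → flog n < s ^ 4 := fun n hn =>
    calc flog n < flog (r ^ flog r) :=
          flog_lt_flog (neg_one_lt_zero.trans_le n.cast_nonneg) hn
      _ ≤ flog r * flog r := flog_rpow_le hr hfr.le
      _ = s ^ 4 := by rw [← hs2]; ring
  have hle := hN.flog_mul_normR_le_sum_add hs hR hl hE (hA ▸ hopt.le)
  have hsl : s ^ 2 ≤ flog l := hs2.trans_le (flog_le_flog (by linarith) hl)
  have hbands : 12 * s * normR N r x ≤ flog l * (12 / s * normR N r x) := by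
    calc 12 * s * normR N r x = s ^ 2 * (12 / s * normR N r x) := by field_simp
      _ ≤ flog l * (12 / s * normR N r x) := by
          gcongr
          exact mul_nonneg (by positivity) (normR_nonneg N r x)
  rw [le_inv_mul_iff₀ ((by positivity : 0 < s ^ 2).trans_le hsl)]
  push_cast at hle
  linarith

theorem inv_flog_mul_sum_normR_le (hN : IsSchlumprechtNorm N) {r R : ℝ} (hR : 2 ≤ R) {l : ℕ}
    (hl : r ≤ l) {E : Fin l → Finset ℕ} (hE : IsSuccessive E) (x : c00) :
    (flog l)⁻¹ * ∑ i, normR N R (proj (E i) x) ≤ normR N r x := by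
  calc (flog l)⁻¹ * ∑ i, normR N R (proj (E i) x)
      ≤ (flog l)⁻¹ * ∑ i, N (proj (E i) x) := by
        gcongr with i
        · exact inv_nonneg.2 (flog_nonneg l.cast_nonneg)
        · exact (hN.1.normR_anti hR _).trans_eq (hN.eq_normR_two _).symm
    _ ≤ normL N l x := hE.inv_flog_mul_sum_le
    _ ≤ normR N r x := hN.1.normL_le_normR hl x

end IsSchlumprechtNorm

/-- Lemma 2.6: there is `d > 1` so that for all real `r ≥ 2` with
`f(r) > d²` and all `x ∈ c₀₀` with `|||x|||_r ≠ ‖x‖_{ℓ∞}`, the norm `|||x|||_r` is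
bounded by `(1 - d/√f(r))⁻¹` times the supremum of
`(1/f(ℓ)) ∑ᵢ |||Eᵢ(x)|||_{r^{f(r)}}` over `ℓ ≥ r` and `E₁ < ⋯ < E_ℓ`. -/
theorem character_lemma
    (N : c00 → ℝ) (hN : IsSchlumprechtNorm N) :
    ∃ d : ℝ, 1 < d ∧ ∀ r : ℝ, 2 ≤ r → d ^ 2 < flog r →
      ∀ x : c00, normR N r x ≠ supNorm x →
        normR N r x ≤ (1 - d / Real.sqrt (flog r))⁻¹ *
          sSup {s | ∃ l : ℕ, r ≤ (l : ℝ) ∧ ∃ E : Fin l → Finset ℕ,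
            (∀ i j : Fin l, i < j → FLt (E i) (E j)) ∧
            s = (flog l)⁻¹ * ∑ i, normR N (r ^ flog r) (proj (E i) x)} := by
  refine ⟨12, by norm_num, fun r hr hfr x hx => ?_⟩
  have hd : 12 / √(flog r) < 1 := by
    have h12 : 12 < √(flog r) := Real.lt_sqrt_of_sq_lt hfr
    exact (div_lt_one (by linarith)).2 h12
  have hR : 2 ≤ r ^ flog r := hr.trans (Real.self_le_rpow_of_one_le (by linarith) (by linarith))
  obtain ⟨l, hl, E, hE, hle⟩ := hN.exists_mul_normR_le_sum_normR (by linarith) (by linarith) hx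
  rw [le_inv_mul_iff₀ (sub_pos.2 hd)]
  refine hle.trans (le_csSup ⟨normR N r x, ?_⟩ ⟨l, hl, E, hE, rfl⟩)
  rintro _ ⟨k, hk, G, hG, rfl⟩
  exact hN.inv_flog_mul_sum_normR_le hR hk hG x
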